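/- arXiv:2509.04200 — 2 statements merged into one kernel-verified Lean document; each statement's English description precedes it below -/
import Mathlib

section
/- Let X be a countably infinite set and E_X the semilattice of idempotents of I_X (the set of partial identity charts). Then ∅ ≺ E_X ≺ PStab(𝒫_2); that is, E_X ⋠ ∅, E_X ≼ PStab(𝒫_2), and PStab(𝒫_2) ⋠ E_X. -/
open Set Cardinal

universe u

/-- A chart on `X` (an element of the symmetric inverse monoid `I_X`): a partial
bijection between subsets of `X`, encoded as a functional, injective relation,
i.e. a set of pairs. -/
structure Chart (X : Type u) : Type u where
  rel : Set (X × X)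
  functional : ∀ ⦃x y y'⦄, (x, y) ∈ rel → (x, y') ∈ rel → y = y'
  injective : ∀ ⦃x x' y⦄, (x, y) ∈ rel → (x', y) ∈ rel → x = x'

namespace Chart

variable {X : Type u}

/-- Composition of charts: compose wherever possible. -/
instance : Mul (Chart X) :=
  ⟨fun f g =>
    { rel := {p | ∃ y, (p.1, y) ∈ f.rel ∧ (y, p.2) ∈ g.rel}
      functional := by
        rintro x y y' ⟨z, hz1, hz2⟩ ⟨w, hw1, hw2⟩
        obtain rfl : z = w := f.functional hz1 hw1
        exact g.functional hz2 hw2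
      injective := by
        rintro x x' y ⟨z, hz1, hz2⟩ ⟨w, hw1, hw2⟩
        obtain rfl : z = w := g.injective hz2 hw2
        exact f.injective hz1 hw1 }⟩

/-- The inverse chart. -/
instance : Inv (Chart X) :=
  ⟨fun f =>
    { rel := {p | (p.2, p.1) ∈ f.rel}
      functional := fun _ _ _ h h' => f.injective h h'
      injective := fun _ _ _ h h' => f.functional h h' }⟩

/-- The domain of a chart. -/
def dom (f : Chart X) : Set X := {x | ∃ y, (x, y) ∈ f.rel}

/-- The range (image) of a chart. -/
def ran (f : Chart X) : Set X := {y | ∃ x, (x, y) ∈ f.rel}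

end Chart

/-- Membership in the subsemigroup of `I_X` generated by a set of charts. -/
inductive InGen {X : Type u} (S : Set (Chart X)) : Chart X → Prop
  | base {f : Chart X} : f ∈ S → InGen S f
  | mul {f g : Chart X} : InGen S f → InGen S g → InGen S (f * g)

/-- The subsemigroup of `I_X` generated by a set of charts. -/
def Sgen {X : Type u} (S : Set (Chart X)) : Set (Chart X) := {f | InGen S f}

/-- The Bergman–Shelah preorder `S ≼ T` on subsets of `I_X`: there is a countable
subset `U ⊆ I_X` with `S` contained in the subsemigroup generated by `T ∪ U`. -/
def BSleq {X : Type u} (S T : Set (Chart X)) : Prop :=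
  ∃ U : Set (Chart X), U.Countable ∧ S ⊆ Sgen (T ∪ U)

/-- Bergman–Shelah equivalence `S ≈ T`. -/
def BSequiv {X : Type u} (S T : Set (Chart X)) : Prop := BSleq S T ∧ BSleq T S

/-- The Bergman–Shelah preorder relative to a cardinal `κ`: `S ≼_κ T` iff there is
`U ⊆ I_X` with `|U| < κ` and `S` contained in the subsemigroup generated by `T ∪ U`. -/
def BSleqC {X : Type u} (κ : Cardinal.{u}) (S T : Set (Chart X)) : Prop :=
  ∃ U : Set (Chart X), #↥U < κ ∧ S ⊆ Sgen (T ∪ U)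

/-- Bergman–Shelah equivalence relative to a cardinal `κ`. -/
def BSequivC {X : Type u} (κ : Cardinal.{u}) (S T : Set (Chart X)) : Prop :=
  BSleqC κ S T ∧ BSleqC κ T S

/-- A chart is a permutation of `X` if it is everywhere defined and surjective. -/
def IsPermChart {X : Type u} (f : Chart X) : Prop :=
  (∀ x : X, ∃ y, (x, y) ∈ f.rel) ∧ ∀ y : X, ∃ x, (x, y) ∈ f.rel

/-- The partwise stabiliser of a family of subsets of `X`: all permutations of `X`
mapping each member of the family onto itself. -/
def PStab {X : Type u} (P : Set (Set X)) : Set (Chart X) :=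
  {f | IsPermChart f ∧ ∀ B ∈ P, {y | ∃ x ∈ B, (x, y) ∈ f.rel} = B}

/-- A subset of `I_X` closed under composition. -/
def IsSubsemigroup {X : Type u} (S : Set (Chart X)) : Prop :=
  ∀ f ∈ S, ∀ g ∈ S, f * g ∈ S

/-- A subsemigroup of `I_X` closed under inversion. -/
def IsInverseSubsemigroup {X : Type u} (S : Set (Chart X)) : Prop :=
  IsSubsemigroup S ∧ ∀ f ∈ S, f⁻¹ ∈ S

/-- The orbit of a point under a set of charts: `{x} ∪ {xf : f ∈ M, x ∈ dom f}`. -/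
def ChartOrbit {X : Type u} (M : Set (Chart X)) (x : X) : Set X :=
  insert x {y | ∃ f ∈ M, (x, y) ∈ f.rel}

/-- The cone of a point under a set of charts: `{xs : s ∈ S, x ∈ dom s}`. -/
def ChartCone {X : Type u} (S : Set (Chart X)) (x : X) : Set X :=
  {y | ∃ f ∈ S, (x, y) ∈ f.rel}

/-- The semilattice of idempotents of `I_X`: the partial identity charts. -/
def EX (X : Type u) : Set (Chart X) := {f | ∀ x y : X, (x, y) ∈ f.rel → y = x}

/-- A `κ`-uniform partition: every part has cardinality `κ`. -/
def IsUniformPartition {X : Type u} (κ : Cardinal.{u}) (P : Set (Set X)) : Prop :=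
  Setoid.IsPartition P ∧ ∀ B ∈ P, #↥B = κ

/-- A `κ`-unbounded partition: all parts have cardinality `< κ` but no cardinal
`c < κ` bounds the cardinalities of all parts. -/
def IsUnboundedPartition {X : Type u} (κ : Cardinal.{u}) (P : Set (Set X)) : Prop :=
  Setoid.IsPartition P ∧ (∀ B ∈ P, #↥B < κ) ∧ ¬∃ c < κ, ∀ B ∈ P, #↥B ≤ c

/-- A `κ`-bounded partition: some cardinal `c < κ` bounds the cardinalities of
all parts. -/
def IsBoundedPartition {X : Type u} (κ : Cardinal.{u}) (P : Set (Set X)) : Prop :=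
  Setoid.IsPartition P ∧ ∃ c < κ, ∀ B ∈ P, #↥B ≤ c

/-- A rooted tree on (a subset of) `X`, encoded via its parent function: every
vertex reaches the root by finitely many applications of `par`. -/
structure RTree (X : Type u) : Type u where
  verts : Set X
  root : X
  root_mem : root ∈ verts
  par : X → X
  par_mem : ∀ x ∈ verts, par x ∈ verts
  par_root : par root = root
  par_reaches : ∀ x ∈ verts, ∃ n : ℕ, par^[n] x = root

namespace RTree

variable {X : Type u}

/-- `T.anc x y` : `x` is an ancestor of `y` (or `x = y`), i.e. `x` lies on the
rooted path to `y`. -/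
def anc (T : RTree X) (x y : X) : Prop := ∃ n : ℕ, T.par^[n] y = x

/-- The level of a vertex: its distance to the root. -/
noncomputable def level (T : RTree X) (x : X) : ℕ := sInf {n : ℕ | T.par^[n] x = T.root}

/-- The children of a vertex. -/
def children (T : RTree X) (x : X) : Set X :=
  {y | y ∈ T.verts ∧ T.par y = x ∧ y ≠ x}

/-- The neighbours of a vertex in the tree (its children together with its
parent, if the vertex is not the root); the degree of the vertex is the size
of this set. -/
def nbhd (T : RTree X) (x : X) : Set X :=
  {y | y ∈ T.verts ∧ ((T.par y = x ∧ y ≠ x) ∨ (T.par x = y ∧ x ≠ y))}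

/-- `P` is the vertex set of a (finite or infinite) path of `T` starting at the
root: a nonempty set of vertices closed under taking parents and linearly
ordered by ancestry. -/
def IsRootedPath (T : RTree X) (P : Set X) : Prop :=
  P.Nonempty ∧ P ⊆ T.verts ∧ (∀ x ∈ P, T.par x ∈ P) ∧
    ∀ x ∈ P, ∀ y ∈ P, T.anc x y ∨ T.anc y x

end RTree

/-- `T'` is a subtree of `T`: a rooted tree on a subset of the vertices of `T`,
with the same root and the same parent relation. -/
def IsSubtree {X : Type u} (T' T : RTree X) : Prop :=
  T'.verts ⊆ T.verts ∧ T'.root = T.root ∧ ∀ x ∈ T'.verts, T'.par x = T.par x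

/-- `Q` is a quasi-subtree of `T`: a rooted tree on a subset of the vertices of
`T` preserving the ancestry relation and the levels of `T`. -/
def IsQuasiSubtree {X : Type u} (Q T : RTree X) : Prop :=
  Q.verts ⊆ T.verts ∧
    (∀ x ∈ Q.verts, ∀ y ∈ Q.verts, (Q.anc x y ↔ T.anc x y)) ∧
    ∀ x ∈ Q.verts, ∀ y ∈ Q.verts, (Q.level x = Q.level y ↔ T.level x = T.level y)

/-- Isomorphism of rooted trees: a bijection of the vertex sets mapping root to
root and commuting with the parent functions. -/
def RTreeIso {X : Type u} {Y : Type u} (T : RTree X) (R : RTree Y) : Prop :=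
  ∃ φ : X → Y, Set.BijOn φ T.verts R.verts ∧ φ T.root = R.root ∧
    ∀ x ∈ T.verts, φ (T.par x) = R.par (φ x)

/-- The semigroup `𝒮(T)` of path-bijections of a rooted tree `T`: charts whose
domain and range are vertex sets of rooted paths and which preserve levels. -/
def pathSg {X : Type u} (T : RTree X) : Set (Chart X) :=
  {f | (∃ P, T.IsRootedPath P ∧ Chart.dom f = P) ∧
    (∃ Q, T.IsRootedPath Q ∧ Chart.ran f = Q) ∧
    ∀ x y : X, (x, y) ∈ f.rel → T.level y = T.level x}

theorem Chart.ext_rel {X : Type u} {f g : Chart X} (h : f.rel = g.rel) : f = g := by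
  cases f; cases g; cases h; rfl

theorem Chart.mem_mul {X : Type u} (f g : Chart X) (x y : X) :
    (x, y) ∈ (f * g).rel ↔ ∃ z, (x, z) ∈ f.rel ∧ (z, y) ∈ g.rel := Iff.rfl

/-- The stages of the generation of a subsemigroup. -/
def genStage {X : Type u} (S : Set (Chart X)) : ℕ → Set (Chart X)
  | 0 => S
  | n + 1 => genStage S n ∪ Set.image2 (fun f g => f * g) (genStage S n) (genStage S n)

theorem genStage_countable {X : Type u} {S : Set (Chart X)} (hS : S.Countable) (n : ℕ) :
    (genStage S n).Countable := by
  induction n with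
  | zero => exact hS
  | succ n ih => exact ih.union (ih.image2 ih _)

theorem genStage_mono {X : Type u} (S : Set (Chart X)) : Monotone (genStage S) :=
  monotone_nat_of_le_succ fun _ => Set.subset_union_left

theorem Sgen_countable {X : Type u} {S : Set (Chart X)} (hS : S.Countable) :
    (Sgen S).Countable := by
  refine (Set.countable_iUnion (genStage_countable hS)).mono ?_
  intro f hf
  have hf2 : InGen S f := hf
  clear hf
  rw [Set.mem_iUnion]
  induction hf2 with
  | base h => exact ⟨0, h⟩
  | mul hf hg ihf ihg =>
    obtain ⟨m, hm⟩ := ihf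
    obtain ⟨n, hn⟩ := ihg
    exact ⟨max m n + 1, Or.inr ⟨_, genStage_mono S (le_max_left m n) hm, _,
      genStage_mono S (le_max_right m n) hn, rfl⟩⟩

/-- The partial identity on `A`. -/
def idOn {X : Type u} (A : Set X) : Chart X where
  rel := {p | p.1 ∈ A ∧ p.2 = p.1}
  functional := by
    rintro x y y' ⟨_, h⟩ ⟨_, h'⟩
    exact h.trans h'.symm
  injective := by
    rintro x x' y ⟨_, h⟩ ⟨_, h'⟩
    exact h.symm.trans h'

theorem idOn_mem {X : Type u} (A : Set X) : idOn A ∈ EX X := fun _ _ h => h.2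

theorem idOn_injective {X : Type u} : Function.Injective (idOn : Set X → Chart X) := by
  intro A B h
  ext x
  have h1 : (x, x) ∈ (idOn A).rel ↔ (x, x) ∈ (idOn B).rel := by rw [h]
  simpa [idOn] using h1

theorem eq_idOn {X : Type u} {f : Chart X} (hf : f ∈ EX X) : f = idOn {x | (x, x) ∈ f.rel} := by
  apply Chart.ext_rel
  ext ⟨x, y⟩
  constructor
  · intro h
    have h1 : y = x := hf x y h
    subst h1
    exact ⟨h, rfl⟩
  · rintro ⟨h, h1⟩
    dsimp only at h1
    subst h1
    exact h

theorem EX_not_countable {X : Type u} [Infinite X] : ¬ (EX X).Countable := by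
  intro h
  have : Countable (EX X) := h.to_subtype
  obtain ⟨g, hg⟩ := Countable.exists_injective_nat (EX X)
  refine Function.cantor_injective
    (fun A : Set X => Infinite.natEmbedding X (g ⟨idOn A, idOn_mem A⟩)) ?_
  intro A B hAB
  have h1 := hg ((Infinite.natEmbedding X).injective hAB)
  exact idOn_injective (congrArg Subtype.val h1)

theorem below_of_gen {X : Type u} (U : Set (Chart X)) {f : Chart X}
    (hf : InGen (EX X ∪ U) f) : ∃ g ∈ Sgen (U ∪ {idOn Set.univ}), f.rel ⊆ g.rel := by
  induction hf with
  | base h =>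
    rcases h with h | h
    · refine ⟨_, InGen.base (Or.inr rfl), ?_⟩
      rintro ⟨x, y⟩ hxy
      exact ⟨trivial, h x y hxy⟩
    · exact ⟨_, InGen.base (Or.inl h), subset_rfl⟩
  | mul _ _ ihf ihg =>
    obtain ⟨f', hf', hff⟩ := ihf
    obtain ⟨g', hg', hgg⟩ := ihg
    refine ⟨f' * g', InGen.mul hf' hg', ?_⟩
    rintro ⟨x, y⟩ ⟨z, h1, h2⟩
    exact ⟨z, hff h1, hgg h2⟩

theorem PStab_countable {X : Type u} (P : Set (Set X)) (h : BSleq (PStab P) (EX X)) :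
    (PStab P).Countable := by
  obtain ⟨U, hU, hsub⟩ := h
  refine (Sgen_countable (hU.union (Set.countable_singleton (idOn Set.univ)))).mono ?_
  intro f hf
  obtain ⟨g, hg, hfg⟩ := below_of_gen U (hsub hf)
  have : f = g := by
    apply Chart.ext_rel
    refine hfg.antisymm ?_
    rintro ⟨x, y⟩ hxy
    obtain ⟨y', hy'⟩ := hf.1.1 x
    have := g.functional hxy (hfg hy')
    subst this
    exact hy'
  rw [this]
  exact hg

/-- A function with injectivity as a total chart. -/
def ofInj {X : Type u} (φ : X → X) (hφ : Function.Injective φ) : Chart X where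
  rel := {p | p.2 = φ p.1}
  functional := fun _ _ _ h h' => Eq.trans h (Eq.symm h')
  injective := fun _ _ _ h h' => hφ (Eq.trans (Eq.symm h) h')

theorem exists_block_swap {X : Type u} (P2 : Set (Set X)) (hpart : Setoid.IsPartition P2)
    (h2 : ∀ B ∈ P2, ∃ a b : X, a ≠ b ∧ B = {a, b}) :
    ∃ s : X → X, (∀ x, s x ≠ x) ∧ (∀ x, s (s x) = x) ∧ ∀ B ∈ P2, ∀ x ∈ B, B = {x, s x} := by
  have key : ∀ x : X, ∃ y, y ≠ x ∧ ∀ B ∈ P2, x ∈ B → B = {x, y} := by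
    intro x
    obtain ⟨B, ⟨hB, hxB⟩, huniq⟩ := hpart.2 x
    obtain ⟨a, b, hab, rfl⟩ := h2 B hB
    rcases hxB with rfl | hx
    · exact ⟨b, hab.symm, fun B' hB' hx' => huniq B' ⟨hB', hx'⟩⟩
    · have hx : x = b := hx
      subst hx
      exact ⟨a, hab, fun B' hB' hx' => (huniq B' ⟨hB', hx'⟩).trans (Set.pair_comm _ _)⟩
  choose s hs1 hs2 using key
  refine ⟨s, hs1, ?_, fun B hB x hx => hs2 x B hB hx⟩
  intro x
  obtain ⟨B, ⟨hB, hxB⟩, -⟩ := hpart.2 x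
  have e1 := hs2 x B hB hxB
  have hsB : s x ∈ B := by rw [e1]; simp
  have e2 := hs2 (s x) B hB hsB
  have : s (s x) ∈ B := by rw [e2]; simp
  rw [e1] at this
  rcases this with h | h
  · exact h
  · exact absurd h (hs1 (s x))

theorem blocks_infinite {X : Type u} [Infinite X] (P2 : Set (Set X))
    (hpart : Setoid.IsPartition P2)
    (h2 : ∀ B ∈ P2, ∃ a b : X, a ≠ b ∧ B = {a, b}) : P2.Infinite := by
  intro hfin
  have h : (⋃₀ P2).Finite := by
    refine hfin.sUnion ?_
    intro B hB
    obtain ⟨a, b, -, rfl⟩ := h2 B hB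
    exact Set.toFinite _
  rw [hpart.sUnion_eq_univ] at h
  exact Set.infinite_univ h

theorem EX_le_PStab {X : Type u} [Countable X] [Infinite X]
    (P2 : Set (Set X)) (hpart : Setoid.IsPartition P2)
    (h2 : ∀ B ∈ P2, ∃ a b : X, a ≠ b ∧ B = {a, b}) : BSleq (EX X) (PStab P2) := by
  classical
  obtain ⟨s, hs1, hs2, hs3⟩ := exists_block_swap P2 hpart h2
  have : Infinite P2 := (blocks_infinite P2 hpart h2).to_subtype
  obtain ⟨g, hg⟩ := Countable.exists_injective_nat X
  have hne : ∀ B : P2, ∃ a, a ∈ B.1 := by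
    rintro ⟨B, hB⟩
    obtain ⟨a, b, -, rfl⟩ := h2 B hB
    exact ⟨a, by simp⟩
  choose r hr using hne
  let ι : X → P2 := fun x => Infinite.natEmbedding P2 (g x)
  have hι : Function.Injective ι := fun x y h => hg ((Infinite.natEmbedding P2).injective h)
  have huniq : ∀ (B C : P2) (x : X), x ∈ B.1 → x ∈ C.1 → B = C := by
    intro B C x hB hC
    exact Subtype.ext ((hpart.2 x).unique ⟨B.2, hB⟩ ⟨C.2, hC⟩)
  have hsB : ∀ B : P2, ∀ x ∈ B.1, s x ∈ B.1 := by
    intro B x hx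
    rw [hs3 B.1 B.2 x hx]
    simp
  let φ : X → X := fun x => r (ι x)
  have hφ : Function.Injective φ := by
    intro x y h
    have h : r (ι x) = r (ι y) := h
    exact hι (huniq _ _ (r (ι x)) (hr _) (by rw [h]; exact hr _))
  have hφs : ∀ x y, φ x ≠ s (φ y) := by
    intro x y h
    have hxy : x = y := hι (huniq _ _ (φ x) (hr _) (by rw [h]; exact hsB _ _ (hr _)))
    subst hxy
    exact hs1 _ h.symm
  let u := ofInj φ hφ
  refine ⟨{u, u⁻¹}, (Set.toFinite _).countable, ?_⟩
  intro f hf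
  obtain ⟨A, rfl⟩ : ∃ A, f = idOn A := ⟨_, eq_idOn hf⟩
  let Q : X → Prop := fun x => ∃ z, z ∉ A ∧ (x = φ z ∨ x = s (φ z))
  have hQ : ∀ x, Q x → Q (s x) := by
    rintro x ⟨z, hz, rfl | rfl⟩
    · exact ⟨z, hz, Or.inr rfl⟩
    · exact ⟨z, hz, Or.inl (hs2 _)⟩
  have hQ' : ∀ x, Q (s x) → Q x := fun x h => by simpa [hs2] using hQ _ h
  let π : X → X := fun x => if Q x then s x else x
  have hπ : ∀ x, π (π x) = x := by
    intro x
    by_cases h : Q x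
    · simp [π, h, hQ x h, hs2]
    · simp [π, h]
  have hπB : ∀ B : P2, ∀ x ∈ B.1, π x ∈ B.1 := by
    intro B x hx
    by_cases h : Q x
    · simpa [π, h] using hsB B x hx
    · simpa [π, h] using hx
  have hπi : Function.Injective π := Function.LeftInverse.injective hπ
  let p := ofInj π hπi
  have hp : p ∈ PStab P2 := by
    refine ⟨⟨fun x => ⟨π x, rfl⟩, fun y => ⟨π y, (hπ y).symm⟩⟩, ?_⟩
    intro B hB
    ext y
    constructor
    · rintro ⟨x, hx, hxy⟩
      have hxy : y = π x := hxy
      rw [hxy]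
      exact hπB ⟨B, hB⟩ x hx
    · intro hy
      exact ⟨π y, hπB ⟨B, hB⟩ y hy, (hπ y).symm⟩
  have e : idOn A = u * p * u⁻¹ := by
    apply Chart.ext_rel
    ext ⟨x, y⟩
    have hr : (x, y) ∈ (u * p * u⁻¹).rel ↔ φ y = π (φ x) := by
      constructor
      · rintro ⟨w, ⟨v, h1, h2⟩, h3⟩
        have h1 : v = φ x := h1
        have h2 : w = π v := h2
        have h3 : w = φ y := h3
        rw [← h3, h2, h1]
      · intro h
        exact ⟨π (φ x), ⟨φ x, rfl, rfl⟩, h.symm⟩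
    rw [hr]
    change (x ∈ A ∧ y = x) ↔ _
    by_cases hx : x ∈ A
    · have : ¬ Q (φ x) := by
        rintro ⟨z, hz, h | h⟩
        · exact hz (hφ h ▸ hx)
        · exact hφs _ _ h
      simp [π, this, hx, hφ.eq_iff]
    · have : Q (φ x) := ⟨x, hx, Or.inl rfl⟩
      simp [π, this, hx, hφs]
  rw [e]
  exact InGen.mul (InGen.mul (InGen.base (Or.inr (by simp))) (InGen.base (Or.inl hp)))
    (InGen.base (Or.inr (by simp)))

/-- for a countably infinite set `X` and a 2-uniform partition
`𝒫₂` of `X`, `∅ ≺ E_X ≺ PStab 𝒫₂`: `E_X ⋠ ∅`, `E_X ≼ PStab 𝒫₂` and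
`PStab 𝒫₂ ⋠ E_X`. -/
theorem stmt18 {X : Type u} [Countable X] [Infinite X]
    (P2 : Set (Set X)) (hpart : Setoid.IsPartition P2)
    (h2 : ∀ B ∈ P2, ∃ a b : X, a ≠ b ∧ B = {a, b}) :
    ¬ BSleq (EX X) (∅ : Set (Chart X)) ∧ BSleq (EX X) (PStab P2) ∧
      ¬ BSleq (PStab P2) (EX X) := by
  refine ⟨?_, EX_le_PStab P2 hpart h2, ?_⟩
  · rintro ⟨U, hU, hsub⟩
    exact EX_not_countable ((Sgen_countable (Set.countable_empty.union hU)).mono hsub)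
  · intro h
    obtain ⟨U, hU, hsub⟩ := EX_le_PStab P2 hpart h2
    exact EX_not_countable ((Sgen_countable ((PStab_countable P2 h).union hU)).mono hsub)
end

section
/- Let T be a rooted tree on a countably infinite vertex set X and let E(T) = 𝒮(T) ∩ E_X be the semilattice of idempotents of 𝒮(T). If T has uncountably many rooted paths, then ∅ ≺ E(T) ≺ E_X; that is, E(T) ⋠ ∅, E(T) ≼ E_X, and E_X ⋠ E(T). -/
open Set Cardinal

universe u

namespace Stmt19

variable {X : Type u}

theorem chart_ext {f g : Chart X} (h : f.rel = g.rel) : f = g := by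
  cases f; cases g; cases h; rfl

theorem mem_mul {f g : Chart X} {x z : X} :
    (x, z) ∈ (f * g).rel ↔ ∃ y, (x, y) ∈ f.rel ∧ (y, z) ∈ g.rel := Iff.rfl

theorem chart_assoc (f g h : Chart X) : f * g * h = f * (g * h) := by
  apply chart_ext
  ext ⟨x, z⟩
  simp only [mem_mul]
  constructor
  · rintro ⟨y, ⟨w, h1, h2⟩, h3⟩
    exact ⟨w, h1, y, h2, h3⟩
  · rintro ⟨w, h1, y, h2, h3⟩
    exact ⟨y, ⟨w, h1, h2⟩, h3⟩

/-- The partial identity on a set. -/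
def idc (A : Set X) : Chart X where
  rel := {p | p.1 ∈ A ∧ p.2 = p.1}
  functional := by
    rintro x y y' ⟨_, h⟩ ⟨_, h'⟩
    exact h.trans h'.symm
  injective := by
    rintro x x' y ⟨_, h⟩ ⟨_, h'⟩
    exact h.symm.trans h'

theorem mem_idc {A : Set X} {x y : X} : (x, y) ∈ (idc A).rel ↔ x ∈ A ∧ y = x := Iff.rfl

theorem dom_idc (A : Set X) : (idc A).dom = A := by
  ext x
  constructor
  · rintro ⟨y, h⟩
    exact h.1
  · intro h
    exact ⟨x, h, rfl⟩

theorem ran_idc (A : Set X) : (idc A).ran = A := by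
  ext x
  constructor
  · rintro ⟨y, h, h'⟩
    simp only at h h'
    exact h' ▸ h
  · intro h
    exact ⟨x, h, rfl⟩

theorem idc_mem_EX (A : Set X) : idc A ∈ EX X := fun _ _ h => h.2

theorem one_mul' (g : Chart X) : idc univ * g = g := by
  apply chart_ext
  ext ⟨x, z⟩
  simp only [mem_mul, mem_idc]
  constructor
  · rintro ⟨y, ⟨_, rfl⟩, h⟩
    exact h
  · intro h
    exact ⟨x, ⟨trivial, rfl⟩, h⟩

theorem mul_one' (g : Chart X) : g * idc univ = g := by
  apply chart_ext
  ext ⟨x, z⟩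
  simp only [mem_mul, mem_idc]
  constructor
  · rintro ⟨y, h, _, rfl⟩
    exact h
  · intro h
    exact ⟨z, h, trivial, rfl⟩

/-- Products of shape given by a word: `none` stands for an element of `S`. -/
def fam (S U : Set (Chart X)) : List (Option U) → Set (Chart X)
  | [] => {idc univ}
  | none :: l => {h | ∃ f ∈ S, ∃ g ∈ fam S U l, h = f * g}
  | some u :: l => {h | ∃ g ∈ fam S U l, h = u.1 * g}

theorem fam_append (S U : Set (Chart X)) (l l' : List (Option U)) (f g : Chart X)
    (hf : f ∈ fam S U l) (hg : g ∈ fam S U l') : f * g ∈ fam S U (l ++ l') := by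
  induction l generalizing f with
  | nil =>
    have : f = idc univ := hf
    subst this
    rw [one_mul']
    exact hg
  | cons a l ih =>
    cases a with
    | none =>
      obtain ⟨f1, h1, g1, h2, rfl⟩ := hf
      exact ⟨f1, h1, g1 * g, ih g1 h2, chart_assoc _ _ _⟩
    | some u =>
      obtain ⟨g1, h2, rfl⟩ := hf
      exact ⟨g1 * g, ih g1 h2, chart_assoc _ _ _⟩

theorem exists_word (S U : Set (Chart X)) (f : Chart X) (hf : InGen (S ∪ U) f) :
    ∃ l, f ∈ fam S U l := by
  induction hf with
  | @base f h =>
    rcases h with h | h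
    · exact ⟨[none], f, h, idc univ, rfl, (mul_one' f).symm⟩
    · exact ⟨[some ⟨f, h⟩], idc univ, rfl, (mul_one' f).symm⟩
  | mul _ _ ih1 ih2 =>
    obtain ⟨l, hl⟩ := ih1
    obtain ⟨l', hl'⟩ := ih2
    exact ⟨l ++ l', fam_append S U l l' _ _ hl hl'⟩

/-- Families of sets with polynomially many traces on finite sets. -/
def Small (C : Set (Set X)) : Prop :=
  ∃ k : ℕ, ∀ F : Finset X, ∃ D : Finset (Set X), D.card ≤ (F.card + 1) ^ k ∧
    ∀ A ∈ C, A ∩ (F : Set X) ∈ D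

theorem small_singleton (B : Set X) : Small {B} := by
  refine ⟨0, fun F => ⟨{B ∩ (F : Set X)}, by simp, ?_⟩⟩
  rintro A rfl
  simp

theorem small_inter {C C' C'' : Set (Set X)} (h : Small C) (h' : Small C')
    (hc : ∀ A ∈ C'', ∃ B ∈ C, ∃ B' ∈ C', A = B ∩ B') : Small C'' := by
  classical
  obtain ⟨k, hk⟩ := h
  obtain ⟨k', hk'⟩ := h'
  refine ⟨k + k', fun F => ?_⟩
  obtain ⟨D, hD, h1⟩ := hk F
  obtain ⟨D', hD', h1'⟩ := hk' F
  refine ⟨Finset.image₂ (· ∩ ·) D D', ?_, ?_⟩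
  · rw [pow_add]
    exact (Finset.card_image₂_le _ _ _).trans (Nat.mul_le_mul hD hD')
  · intro A hA
    obtain ⟨B, hB, B', hB', rfl⟩ := hc A hA
    refine Finset.mem_image₂.2 ⟨_, h1 B hB, _, h1' B' hB', ?_⟩
    ext x
    simp only [mem_inter_iff]
    tauto

theorem small_preimage {C C'' : Set (Set X)} (u : Chart X) (h : Small C)
    (hc : ∀ A ∈ C'', ∃ B ∈ C, A = {x | ∃ y ∈ B, (x, y) ∈ u.rel}) : Small C'' := by
  classical
  obtain ⟨k, hk⟩ := h
  refine ⟨k, fun F => ?_⟩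
  let v : X → X := fun x => if hx : ∃ y, (x, y) ∈ u.rel then hx.choose else x
  have hv : ∀ x y, (x, y) ∈ u.rel → v x = y := by
    intro x y hxy
    have hx : ∃ y, (x, y) ∈ u.rel := ⟨y, hxy⟩
    simp only [v, dif_pos hx]
    exact u.functional hx.choose_spec hxy
  obtain ⟨D, hD, h1⟩ := hk (F.image v)
  refine ⟨D.image (fun B => {x | ∃ y ∈ B, (x, y) ∈ u.rel} ∩ (F : Set X)), ?_, ?_⟩
  · refine Finset.card_image_le.trans (hD.trans ?_)
    exact Nat.pow_le_pow_left (Nat.add_le_add_right Finset.card_image_le 1) k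
  · intro A hA
    obtain ⟨B, hB, rfl⟩ := hc A hA
    refine Finset.mem_image.2 ⟨_, h1 B hB, ?_⟩
    ext x
    constructor
    · rintro ⟨⟨y, hy, hxy⟩, hx⟩
      exact ⟨⟨y, hy.1, hxy⟩, hx⟩
    · rintro ⟨⟨y, hy, hxy⟩, hx⟩
      refine ⟨⟨y, ⟨hy, ?_⟩, hxy⟩, hx⟩
      rw [Finset.coe_image]
      exact ⟨x, hx, hv x y hxy⟩

theorem anc_refl (T : RTree X) (x : X) : T.anc x x := ⟨0, rfl⟩

theorem anc_trans (T : RTree X) {x y z : X} (h : T.anc x y) (h' : T.anc y z) : T.anc x z := by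
  obtain ⟨n, rfl⟩ := h
  obtain ⟨m, rfl⟩ := h'
  exact ⟨n + m, Function.iterate_add_apply _ _ _ _⟩

theorem path_anc (T : RTree X) {P : Set X} (hP : T.IsRootedPath P) {x y : X}
    (hx : x ∈ P) (h : T.anc y x) : y ∈ P := by
  obtain ⟨n, rfl⟩ := h
  induction n with
  | zero => exact hx
  | succ n ih =>
    rw [Function.iterate_succ_apply']
    exact hP.2.2.1 _ ih

theorem exists_deepest (T : RTree X) {P : Set X} (hP : T.IsRootedPath P) (s : Finset X)
    (hs : (s : Set X) ⊆ P) (hne : s.Nonempty) : ∃ x ∈ s, ∀ y ∈ s, T.anc y x := by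
  classical
  induction hne using Finset.Nonempty.cons_induction with
  | singleton a =>
    refine ⟨a, by simp, ?_⟩
    intro y hy
    rw [Finset.mem_singleton.1 hy]
    exact anc_refl T a
  | cons a s ha hne ih =>
    simp only [Finset.coe_cons, insert_subset_iff] at hs
    obtain ⟨x, hx, h⟩ := ih hs.2
    rcases hP.2.2.2 a hs.1 x (hs.2 hx) with h' | h'
    · refine ⟨x, by simp [hx], ?_⟩
      intro y hy
      rcases Finset.mem_cons.1 hy with rfl | hy
      · exact h'
      · exact h y hy
    · refine ⟨a, by simp, ?_⟩
      intro y hy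
      rcases Finset.mem_cons.1 hy with rfl | hy
      · exact anc_refl T _
      · exact anc_trans T (h y hy) h'

theorem small_paths (T : RTree X) : Small {P : Set X | T.IsRootedPath P} := by
  classical
  refine ⟨1, fun F => ⟨insert ∅ (F.image fun x => {y | y ∈ F ∧ T.anc y x}), ?_, ?_⟩⟩
  · rw [pow_one]
    exact (Finset.card_insert_le _ _).trans (Nat.add_le_add_right Finset.card_image_le 1)
  · intro P hP
    by_cases hne : (F.filter (· ∈ P)).Nonempty
    · obtain ⟨x, hx, h⟩ := exists_deepest T hP (F.filter (· ∈ P))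
        (by intro y hy; exact (Finset.mem_filter.1 hy).2) hne
      have hx' := Finset.mem_filter.1 hx
      refine Finset.mem_insert_of_mem (Finset.mem_image.2 ⟨x, hx'.1, ?_⟩)
      ext y
      constructor
      · rintro ⟨h1, h2⟩
        exact ⟨path_anc T hP hx'.2 h2, h1⟩
      · rintro ⟨h1, h2⟩
        exact ⟨h2, h y (Finset.mem_filter.2 ⟨h2, h1⟩)⟩
    · refine Finset.mem_insert.2 (Or.inl ?_)
      rw [eq_empty_iff_forall_notMem]
      rintro y ⟨h1, h2⟩
      exact hne ⟨y, Finset.mem_filter.2 ⟨h2, h1⟩⟩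

theorem small_fam (T : RTree X) (U : Set (Chart X)) (l : List (Option U)) :
    Small (Chart.dom '' fam (pathSg T ∩ EX X) U l) := by
  induction l with
  | nil =>
    simp only [fam, image_singleton]
    exact small_singleton _
  | cons a l ih =>
    cases a with
    | none =>
      refine small_inter (small_paths T) ih ?_
      rintro _ ⟨_, ⟨f, hf, g, hg, rfl⟩, rfl⟩
      obtain ⟨⟨⟨P, hP, hfP⟩, -⟩, hE⟩ := hf
      refine ⟨P, hP, g.dom, ⟨g, hg, rfl⟩, ?_⟩
      subst hfP
      ext x
      constructor
      · rintro ⟨z, y, h1, h2⟩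
        have := hE _ _ h1
        simp only at this h1 h2
        subst this
        exact ⟨⟨_, h1⟩, z, h2⟩
      · rintro ⟨⟨y, h1⟩, z, h2⟩
        have := hE _ _ h1
        subst this
        exact ⟨z, _, h1, h2⟩
    | some u =>
      refine small_preimage u.1 ih ?_
      rintro _ ⟨_, ⟨g, hg, rfl⟩, rfl⟩
      refine ⟨g.dom, ⟨g, hg, rfl⟩, ?_⟩
      ext x
      constructor
      · rintro ⟨z, y, h1, h2⟩
        exact ⟨y, ⟨z, h2⟩, h1⟩
      · rintro ⟨y, ⟨z, h2⟩, h1⟩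
        exact ⟨z, y, h1, h2⟩

theorem exists_exp_gt (k : ℕ) : ∃ n : ℕ, (n + 1) ^ k < 2 ^ n := by
  have h := tendsto_pow_const_div_const_pow_of_one_lt k (r := (2 : ℝ)) (by norm_num)
  have h2 := (h.comp (Filter.tendsto_add_atTop_nat 1)).eventually
    (gt_mem_nhds (show (0 : ℝ) < 1 / 2 by norm_num))
  obtain ⟨n, hn⟩ := h2.exists
  refine ⟨n, ?_⟩
  simp only [Function.comp] at hn
  rw [div_lt_iff₀ (by positivity), pow_succ (2 : ℝ)] at hn
  have : ((n : ℝ) + 1) ^ k < 2 ^ n := by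
    push_cast at hn
    linarith
  exact_mod_cast this

theorem exists_avoid [Countable X] [Infinite X] {ι : Type*} [Countable ι]
    (C : ι → Set (Set X)) (hC : ∀ i, Small (C i)) : ∃ A : Set X, ∀ i, A ∉ C i := by
  classical
  obtain ⟨c, hc⟩ := exists_injective_nat ι
  obtain ⟨e⟩ : Nonempty (ℕ × ℕ ≃ X) := nonempty_equiv_of_countable
  have key : ∀ i, ∃ F : Finset X, (∀ x ∈ F, (e.symm x).1 = c i) ∧
      ∃ B : Set X, B ⊆ F ∧ ∀ A ∈ C i, A ∩ (F : Set X) ≠ B := by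
    intro i
    obtain ⟨k, hk⟩ := hC i
    obtain ⟨n, hn⟩ := exists_exp_gt k
    let F : Finset X := (Finset.range n).image fun m => e (c i, m)
    have hF : F.card = n := by
      rw [Finset.card_image_of_injective, Finset.card_range]
      intro a b hab
      simpa using hab
    refine ⟨F, ?_, ?_⟩
    · intro x hx
      obtain ⟨m, -, rfl⟩ := Finset.mem_image.1 hx
      simp
    · obtain ⟨D, hD, h1⟩ := hk F
      let Q : Finset (Set X) := Finset.image (fun s : Finset X => (s : Set X)) F.powerset
      have hQ : Q.card = 2 ^ n := by
        rw [Finset.card_image_of_injective _ Finset.coe_injective, Finset.card_powerset, hF]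
      have : D.card < Q.card := by rw [hQ]; rw [hF] at hD; omega
      obtain ⟨B, hB, hBD⟩ := Finset.exists_mem_notMem_of_card_lt_card this
      obtain ⟨s, hs, rfl⟩ := Finset.mem_image.1 hB
      refine ⟨s, by exact_mod_cast Finset.mem_powerset.1 hs, ?_⟩
      intro A hA h
      exact hBD (h ▸ h1 A hA)
  choose F hF B hBF hB using key
  refine ⟨⋃ i, B i, fun i hi => hB i _ hi ?_⟩
  ext x
  constructor
  · rintro ⟨h1, h2⟩
    obtain ⟨j, hj⟩ := mem_iUnion.1 h1
    have : j = i := hc ((hF j x (hBF j hj)).symm.trans (hF i x h2))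
    exact this ▸ hj
  · intro h
    exact ⟨mem_iUnion.2 ⟨i, h⟩, hBF i h⟩

theorem countable_fam (U : Set (Chart X)) (l : List (Option U)) :
    (fam ∅ U l).Countable := by
  induction l with
  | nil => exact countable_singleton _
  | cons a l ih =>
    cases a with
    | none =>
      convert countable_empty
      ext h
      simp [fam]
    | some u =>
      refine (ih.image fun g => u.1 * g).mono ?_
      rintro _ ⟨g, hg, rfl⟩
      exact ⟨g, hg, rfl⟩

end Stmt19

/-- for a rooted tree `T` on a countably infinite vertex set `X`
with uncountably many rooted paths, the semilattice of idempotents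
`E(T) = 𝒮(T) ∩ E_X` satisfies `∅ ≺ E(T) ≺ E_X`: `E(T) ⋠ ∅`, `E(T) ≼ E_X` and
`E_X ⋠ E(T)`. -/
theorem stmt19 {X : Type u} [Countable X] [Infinite X] (T : RTree X)
    (hT : T.verts = Set.univ)
    (hunc : ¬ {P : Set X | T.IsRootedPath P}.Countable) :
    ¬ BSleq (pathSg T ∩ EX X) (∅ : Set (Chart X)) ∧
      BSleq (pathSg T ∩ EX X) (EX X) ∧
      ¬ BSleq (EX X) (pathSg T ∩ EX X) := by
  refine ⟨?_, ?_, ?_⟩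
  · rintro ⟨U, hU, h⟩
    haveI : Countable U := hU.to_subtype
    have hcnt : (⋃ l, Stmt19.fam ∅ U l).Countable :=
      countable_iUnion fun l => Stmt19.countable_fam U l
    apply hunc
    refine (hcnt.image Chart.dom).mono ?_
    intro P hP
    have hmem : Stmt19.idc P ∈ pathSg T ∩ EX X := by
      refine ⟨⟨⟨P, hP, Stmt19.dom_idc P⟩, ⟨P, hP, Stmt19.ran_idc P⟩, ?_⟩, Stmt19.idc_mem_EX P⟩
      rintro x y ⟨_, hxy⟩
      simp only at hxy
      rw [hxy]
    obtain ⟨l, hl⟩ := Stmt19.exists_word ∅ U _ (h hmem)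
    exact ⟨_, mem_iUnion.2 ⟨l, hl⟩, Stmt19.dom_idc P⟩
  · exact ⟨∅, countable_empty, fun f hf => InGen.base (Or.inl hf.2)⟩
  · rintro ⟨U, hU, h⟩
    haveI : Countable U := hU.to_subtype
    obtain ⟨A, hA⟩ := Stmt19.exists_avoid _ (Stmt19.small_fam T U)
    obtain ⟨l, hl⟩ := Stmt19.exists_word _ U _ (h (Stmt19.idc_mem_EX A))
    exact hA l ⟨_, hl, Stmt19.dom_idc A⟩
end
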